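/- arXiv:1906.04785 — 2 statements merged into one kernel-verified Lean document; each statement's English description precedes it below -/
import Mathlib

section
/- Let μ ∈ ℝ and σ > 0, and let X be a real-valued integrable random variable such that E[σ² g'(X) − (X − μ) g(X)] = 0 for every compactly supported continuously differentiable function g : ℝ → ℝ. Then X ~ N(μ, σ²). -/
open MeasureTheory ProbabilityTheory

/-!
If `p > 0` is `C¹`, the Stein operator `g ↦ g' + (p' / p) g` sends `f / p` to `f' / p`. A measure
`ν` killed by this operator therefore gives a measure `ρ = p⁻¹ ν` with `∫ f' dρ = 0` for every test
function `f`. Taking for `f` the sliding integral `x ↦ ∫ t in x..x + a, h t`, whose derivative is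
`h (x + a) - h x`, shows that `ρ` is translation invariant, so `ρ` is a multiple of Lebesgue measure
and `ν` is a multiple of `p dx`. For the Gaussian density, `p' / p = -(x - μ) / σ²`.
-/

open scoped NNReal Pointwise

section SlidingIntegral

variable {E : Type*} [NormedAddCommGroup E] [NormedSpace ℝ E]

/-- The integral of `h` over the moving window from `x` to `x + a`, oriented when `a < 0`. It is the
compactly supported primitive of `x ↦ h (x + a) - h x` when `h` is a test function. -/
noncomputable def slidingIntegral (h : ℝ → E) (a x : ℝ) : E :=
  ∫ t in x..x + a, h t

variable {h : ℝ → E}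

lemma hasCompactSupport_slidingIntegral (hsupp : HasCompactSupport h) (a : ℝ) :
    HasCompactSupport (slidingIntegral h a) := by
  have hcompact : IsCompact (tsupport h + Set.uIcc 0 (-a)) := IsCompact.add hsupp isCompact_uIcc
  refine HasCompactSupport.intro hcompact fun x hx ↦ ?_
  have h_eq_zero : ∀ t ∈ Set.uIcc x (x + a), h t = 0 := by
    intro t ht
    have hshift : x - t ∈ Set.uIcc 0 (-a) := by
      rw [Set.mem_uIcc] at ht ⊢
      grind
    exact image_eq_zero_of_notMem_tsupport fun hmem ↦
      hx ⟨t, hmem, x - t, hshift, add_sub_cancel t x⟩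
  simpa [slidingIntegral] using intervalIntegral.integral_congr h_eq_zero

variable [CompleteSpace E]

lemma hasDerivAt_slidingIntegral (hcont : Continuous h) (a x : ℝ) :
    HasDerivAt (slidingIntegral h a) (h (x + a) - h x) x := by
  have hprim (y : ℝ) : HasDerivAt (fun y ↦ ∫ t in 0..y, h t) (h y) y :=
    hcont.integral_hasStrictDerivAt 0 y |>.hasDerivAt
  refine (((hprim (x + a)).comp_add_const x a).sub (hprim x)).congr_of_eventuallyEq
    (.of_forall fun y ↦ ?_)
  exact (intervalIntegral.integral_interval_sub_left
    (hcont.intervalIntegrable _ _) (hcont.intervalIntegrable _ _)).symm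

lemma deriv_slidingIntegral (hcont : Continuous h) (a : ℝ) :
    deriv (slidingIntegral h a) = fun x ↦ h (x + a) - h x :=
  funext fun x ↦ (hasDerivAt_slidingIntegral hcont a x).deriv

lemma contDiff_one_slidingIntegral (hcont : Continuous h) (a : ℝ) :
    ContDiff ℝ 1 (slidingIntegral h a) := by
  rw [contDiff_one_iff_deriv, deriv_slidingIntegral hcont]
  exact ⟨fun x ↦ (hasDerivAt_slidingIntegral hcont a x).differentiableAt, by fun_prop⟩

end SlidingIntegral

section VanishingDerivative

variable {ρ : Measure ℝ} [IsLocallyFiniteMeasure ρ]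

lemma integral_comp_add_right_eq_of_forall_integral_deriv_eq_zero
    (hρ : ∀ f : ℝ → ℝ, ContDiff ℝ 1 f → HasCompactSupport f → ∫ x, deriv f x ∂ρ = 0)
    {h : ℝ → ℝ} (hcont : Continuous h) (hsupp : HasCompactSupport h) (a : ℝ) :
    ∫ x, h (x + a) ∂ρ = ∫ x, h x ∂ρ := by
  have hshift : Integrable (fun x ↦ h (x + a)) ρ :=
    (hcont.comp (continuous_add_const a)).integrable_of_hasCompactSupport
      (hsupp.comp_homeomorph (Homeomorph.addRight a))
  have hzero := hρ _ (contDiff_one_slidingIntegral hcont a)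
    (hasCompactSupport_slidingIntegral hsupp a)
  rw [deriv_slidingIntegral hcont,
    integral_sub hshift (hcont.integrable_of_hasCompactSupport hsupp)] at hzero
  exact sub_eq_zero.mp hzero

lemma isAddLeftInvariant_of_forall_integral_deriv_eq_zero
    (hρ : ∀ f : ℝ → ℝ, ContDiff ℝ 1 f → HasCompactSupport f → ∫ x, deriv f x ∂ρ = 0) :
    ρ.IsAddLeftInvariant := by
  refine ⟨fun a ↦ ?_⟩
  have : (ρ.map (a + ·)).Regular := Measure.Regular.map (Homeomorph.addLeft a)
  refine Measure.ext_of_integral_eq_on_compactlySupported fun h ↦ ?_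
  rw [(measurableEmbedding_addLeft a).integral_map]
  simp only [add_comm a]
  exact integral_comp_add_right_eq_of_forall_integral_deriv_eq_zero hρ h.continuous
    h.hasCompactSupport a

lemma exists_eq_smul_volume_of_forall_integral_deriv_eq_zero
    (hρ : ∀ f : ℝ → ℝ, ContDiff ℝ 1 f → HasCompactSupport f → ∫ x, deriv f x ∂ρ = 0) :
    ∃ c : ℝ≥0, ρ = c • (volume : Measure ℝ) :=
  have := isAddLeftInvariant_of_forall_integral_deriv_eq_zero hρ
  ⟨_, Measure.isAddLeftInvariant_eq_smul ρ volume⟩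

end VanishingDerivative

/-- The Stein operator `g ↦ g' + (p' / p) g` of a density `p` on the real line. The integral of
`steinOperator p g` against `p` vanishes for every test function `g`, because
`p * steinOperator p g = (p * g)'`. -/
noncomputable def steinOperator (p g : ℝ → ℝ) (x : ℝ) : ℝ :=
  deriv g x + logDeriv p x * g x

section SteinOperator

variable {p : ℝ → ℝ}

lemma steinOperator_div {f : ℝ → ℝ} {x : ℝ} (hf : DifferentiableAt ℝ f x)
    (hp : DifferentiableAt ℝ p x) (hpx : p x ≠ 0) :
    steinOperator p (fun y ↦ f y / p y) x = (p x)⁻¹ * deriv f x := by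
  rw [steinOperator, deriv_fun_div hf hp hpx, logDeriv_apply]
  field_simp
  ring

variable {ν : Measure ℝ}

lemma integral_deriv_withDensity_inv_eq_zero (hp : ContDiff ℝ 1 p) (hpos : ∀ x, 0 < p x)
    (hν : ∀ g : ℝ → ℝ, ContDiff ℝ 1 g → HasCompactSupport g → ∫ x, steinOperator p g x ∂ν = 0)
    {f : ℝ → ℝ} (hf : ContDiff ℝ 1 f) (hsupp : HasCompactSupport f) :
    ∫ x, deriv f x ∂ν.withDensity (fun x ↦ ENNReal.ofReal (p x)⁻¹) = 0 := by
  have hpne (x : ℝ) : p x ≠ 0 := (hpos x).ne'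
  have hinv_meas : Measurable fun x ↦ ENNReal.ofReal (p x)⁻¹ :=
    hp.continuous.measurable.inv.ennreal_ofReal
  calc ∫ x, deriv f x ∂ν.withDensity (fun x ↦ ENNReal.ofReal (p x)⁻¹)
      = ∫ x, (p x)⁻¹ * deriv f x ∂ν := by
        rw [integral_withDensity_eq_integral_toReal_smul hinv_meas
          (.of_forall fun x ↦ ENNReal.ofReal_lt_top)]
        simp only [ENNReal.toReal_ofReal (inv_nonneg.mpr (hpos _).le), smul_eq_mul]
    _ = ∫ x, steinOperator p (fun y ↦ f y / p y) x ∂ν :=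
        integral_congr_ae <| .of_forall fun x ↦ (steinOperator_div
          (hf.differentiable_one x) (hp.differentiable_one x) (hpne x)).symm
    _ = 0 := hν _ (hf.div hp hpne) (hsupp.mul_right (f' := fun y ↦ (p y)⁻¹))

theorem exists_eq_smul_withDensity_of_forall_integral_steinOperator_eq_zero
    [IsLocallyFiniteMeasure ν] (hp : ContDiff ℝ 1 p) (hpos : ∀ x, 0 < p x)
    (hν : ∀ g : ℝ → ℝ, ContDiff ℝ 1 g → HasCompactSupport g → ∫ x, steinOperator p g x ∂ν = 0) :
    ∃ c : ℝ≥0, ν = c • volume.withDensity fun x ↦ ENNReal.ofReal (p x) := by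
  have hcont : Continuous fun x ↦ (p x)⁻¹ := hp.continuous.inv₀ fun x ↦ (hpos x).ne'
  have : IsLocallyFiniteMeasure (ν.withDensity fun x ↦ ENNReal.ofReal (p x)⁻¹) :=
    IsLocallyFiniteMeasure.withDensity_ofReal hcont
  obtain ⟨c, hc⟩ := exists_eq_smul_volume_of_forall_integral_deriv_eq_zero
    fun f ↦ integral_deriv_withDensity_inv_eq_zero hp hpos hν (f := f)
  refine ⟨c, ?_⟩
  calc ν = (ν.withDensity fun x ↦ ENNReal.ofReal (p x)⁻¹).withDensity
        fun x ↦ (ENNReal.ofReal (p x)⁻¹)⁻¹ :=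
        (withDensity_inv_same hcont.measurable.ennreal_ofReal
          (.of_forall fun x ↦ by simpa using hpos x) (.of_forall fun x ↦ by simp)).symm
    _ = (c • volume).withDensity fun x ↦ ENNReal.ofReal (p x) := by
        rw [hc]
        simp only [ENNReal.ofReal_inv_of_pos (hpos _), inv_inv]
    _ = c • volume.withDensity fun x ↦ ENNReal.ofReal (p x) := withDensity_smul_measure _ _

theorem eq_withDensity_of_forall_integral_steinOperator_eq_zero [IsProbabilityMeasure ν]
    [IsProbabilityMeasure (volume.withDensity fun x ↦ ENNReal.ofReal (p x))]
    (hp : ContDiff ℝ 1 p) (hpos : ∀ x, 0 < p x)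
    (hν : ∀ g : ℝ → ℝ, ContDiff ℝ 1 g → HasCompactSupport g → ∫ x, steinOperator p g x ∂ν = 0) :
    ν = volume.withDensity fun x ↦ ENNReal.ofReal (p x) := by
  obtain ⟨c, hc⟩ := exists_eq_smul_withDensity_of_forall_integral_steinOperator_eq_zero hp hpos hν
  have hc_one : c = 1 := by
    have hmass := DFunLike.congr_fun hc Set.univ
    rw [Measure.smul_apply, measure_univ, measure_univ, ENNReal.smul_def, smul_eq_mul,
      mul_one] at hmass
    exact_mod_cast hmass.symm
  rwa [hc_one, one_smul] at hc

end SteinOperator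

section Gaussian

lemma hasDerivAt_gaussianPDFReal (μ : ℝ) (v : ℝ≥0) (x : ℝ) :
    HasDerivAt (gaussianPDFReal μ v) (-((x - μ) / v) * gaussianPDFReal μ v x) x := by
  have hexponent : HasDerivAt (fun y ↦ -(y - μ) ^ 2 / (2 * v)) (-((x - μ) / v)) x := by
    refine ((((hasDerivAt_id x).sub_const μ).pow 2).neg.div_const (2 * (v : ℝ))).congr_deriv ?_
    rw [← mul_div_mul_left (x - μ) (v : ℝ) two_ne_zero]
    simp [neg_div]
  rw [gaussianPDFReal_def]
  exact (hexponent.exp.const_mul _).congr_deriv (by ring)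

lemma contDiff_gaussianPDFReal (μ : ℝ) (v : ℝ≥0) {n : WithTop ℕ∞} :
    ContDiff ℝ n (gaussianPDFReal μ v) := by
  rw [gaussianPDFReal_def]
  fun_prop

variable {μ : ℝ} {v : ℝ≥0}

lemma logDeriv_gaussianPDFReal (hv : v ≠ 0) (x : ℝ) :
    logDeriv (gaussianPDFReal μ v) x = -((x - μ) / v) := by
  rw [logDeriv_apply, (hasDerivAt_gaussianPDFReal μ v x).deriv,
    mul_div_cancel_right₀ _ (gaussianPDFReal_pos μ v x hv).ne']

theorem eq_gaussianReal_of_forall_integral_stein_eq_zero {ν : Measure ℝ} [IsProbabilityMeasure ν]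
    (hv : v ≠ 0)
    (hν : ∀ g : ℝ → ℝ, ContDiff ℝ 1 g → HasCompactSupport g →
      ∫ x, (v * deriv g x - (x - μ) * g x) ∂ν = 0) :
    ν = gaussianReal μ v := by
  have hgauss := gaussianReal_of_var_ne_zero μ hv
  have : IsProbabilityMeasure
      (volume.withDensity fun x ↦ ENNReal.ofReal (gaussianPDFReal μ v x)) :=
    hgauss ▸ inferInstanceAs (IsProbabilityMeasure (gaussianReal μ v))
  rw [hgauss]
  refine eq_withDensity_of_forall_integral_steinOperator_eq_zero (contDiff_gaussianPDFReal μ v)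
    (fun x ↦ gaussianPDFReal_pos μ v x hv) fun g hg hsupp ↦ ?_
  calc ∫ x, steinOperator (gaussianPDFReal μ v) g x ∂ν
      = ∫ x, (v : ℝ)⁻¹ * (v * deriv g x - (x - μ) * g x) ∂ν := by
        refine integral_congr_ae (.of_forall fun x ↦ ?_)
        simp only [steinOperator, logDeriv_gaussianPDFReal hv]
        field_simp
        ring
    _ = 0 := by rw [integral_const_mul, hν g hg hsupp, mul_zero]

end Gaussian

theorem stein_characterisation_normal_sufficiency_general
    {Ω : Type*} [MeasurableSpace Ω] (P : Measure Ω) [IsProbabilityMeasure P]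
    (μ σ : ℝ) (hσ : σ ≠ 0) (X : Ω → ℝ) (hX : AEMeasurable X P)
    (hstein : ∀ g : ℝ → ℝ, ContDiff ℝ 1 g → HasCompactSupport g →
      ∫ ω, (σ ^ 2 * deriv g (X ω) - (X ω - μ) * g (X ω)) ∂P = 0) :
    P.map X = gaussianReal μ ⟨σ ^ 2, sq_nonneg σ⟩ := by
  have := Measure.isProbabilityMeasure_map hX
  refine eq_gaussianReal_of_forall_integral_stein_eq_zero
    (fun hv ↦ pow_ne_zero 2 hσ (congrArg NNReal.toReal hv)) fun g hg hsupp ↦ ?_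
  have hcont : Continuous fun x ↦ σ ^ 2 * deriv g x - (x - μ) * g x := by
    have := hg.continuous_deriv_one
    have := hg.continuous
    fun_prop
  exact (integral_map hX hcont.aestronglyMeasurable).trans (hstein g hg hsupp)

/-- Sufficiency direction of the Stein characterisation of the normal distribution:
if `X` is integrable and `E[σ² g'(X) − (X − μ) g(X)] = 0` for every compactly supported
continuously differentiable `g : ℝ → ℝ`, then `X ~ N(μ, σ²)`. -/
theorem stein_characterisation_normal_sufficiency
    {Ω : Type*} [MeasurableSpace Ω] (P : Measure Ω) [IsProbabilityMeasure P]
    (μ σ : ℝ) (hσ : 0 < σ) (X : Ω → ℝ) (hX : Measurable X)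
    (hint : Integrable X P)
    (hstein : ∀ g : ℝ → ℝ, ContDiff ℝ 1 g → HasCompactSupport g →
      ∫ ω, (σ ^ 2 * deriv g (X ω) - (X ω - μ) * g (X ω)) ∂P = 0) :
    P.map X = gaussianReal μ ⟨σ ^ 2, sq_nonneg σ⟩ :=
  stein_characterisation_normal_sufficiency_general P μ σ hσ.ne' X hX.aemeasurable hstein
end

section
/- Let ρ ∈ (−1, 1), σ_X > 0, σ_Y > 0 and n ≥ 1, and define p : ℝ → ℝ for x ≠ 0 by p(x) = (n^{(n+1)/2} 2^{(1−n)/2} |x|^{(n−1)/2}) / ((σ_X σ_Y)^{(n+1)/2} √(π(1 − ρ²)) Γ(n/2)) · exp(ρ n x/(σ_X σ_Y (1 − ρ²))) · K_{(n−1)/2}(n|x|/(σ_X σ_Y (1 − ρ²))), where K_ν(y) = ∫₀^∞ e^{−y cosh t} cosh(νt) dt. Then p is nonnegative, integrable on ℝ, and ∫_{−∞}^{∞} p(x) dx = 1. -/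
/-!
Substituting `r = y eᵗ` in the integral defining `K_ν` gives
`y ^ ν K_ν(y) = ½ ∫₀^∞ e^{-y² / (2 r)} r ^ (ν - 1) e^{-r / 2} dr`, so `e^{ρ u} |u| ^ ν K_ν(|u|)`
is a mixture of Gaussians in `u` over a gamma-type weight in `r`. By Fubini its total mass is a
Gaussian integral in `u` followed by a gamma integral in `r`. The density `p` is the normalised
mixture with `ν = (n - 1) / 2`, rescaled by `n / (σ_X σ_Y (1 - ρ²))`.
-/

open MeasureTheory

/-- The modified Bessel function of the second kind,
`K_ν(y) = ∫₀^∞ e^{−y cosh t} cosh(νt) dt`. -/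
noncomputable def besselK (ν y : ℝ) : ℝ :=
  ∫ t in Set.Ioi (0 : ℝ), Real.exp (-(y * Real.cosh t)) * Real.cosh (ν * t)

open Real Set

section Gaussian

variable {b : ℝ}

lemma exp_mul_sub_mul_sq (hb : b ≠ 0) (a u : ℝ) :
    exp (a * u - b * u ^ 2) = exp (a ^ 2 / (4 * b)) * exp (-b * (u - a / (2 * b)) ^ 2) := by
  rw [← exp_add]
  congr 1
  field_simp
  ring

lemma integrable_exp_mul_sub_mul_sq (hb : 0 < b) (a : ℝ) :
    Integrable fun u : ℝ => exp (a * u - b * u ^ 2) := by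
  simp_rw [exp_mul_sub_mul_sq hb.ne']
  exact ((integrable_exp_neg_mul_sq hb).comp_sub_right _).const_mul _

lemma integral_exp_mul_sub_mul_sq (hb : 0 < b) (a : ℝ) :
    ∫ u : ℝ, exp (a * u - b * u ^ 2) = √(π / b) * exp (a ^ 2 / (4 * b)) := by
  simp_rw [exp_mul_sub_mul_sq hb.ne']
  rw [integral_const_mul, integral_sub_right_eq_self (fun u => exp (-b * u ^ 2)),
    integral_gaussian, mul_comm]

end Gaussian

lemma integral_Ioi_zero_eq_integral_exp_smul {E : Type*} [NormedAddCommGroup E] [NormedSpace ℝ E]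
    (g : ℝ → E) : ∫ r in Ioi 0, g r = ∫ t, exp t • g (exp t) := by
  rw [← range_exp, ← image_univ, integral_image_eq_integral_deriv_smul_of_monotoneOn .univ
    (fun t _ => (hasDerivAt_exp t).hasDerivWithinAt) (exp_monotone.monotoneOn _), setIntegral_univ]

lemma one_add_sq_div_two_le_cosh (t : ℝ) : 1 + t ^ 2 / 2 ≤ cosh t := by
  have half_le_sinh : |t / 2| ≤ |sinh (t / 2)| := by
    rw [abs_sinh]
    exact self_le_sinh_iff.mpr (abs_nonneg _)
  have cosh_eq_half_angle : cosh t = 1 + 2 * sinh (t / 2) ^ 2 := by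
    rw [← mul_div_cancel₀ t (two_ne_zero' ℝ), cosh_two_mul, cosh_sq, mul_div_cancel₀ t two_ne_zero]
    ring
  linarith [sq_le_sq.mpr half_le_sinh]

section BesselK

variable {y : ℝ}

lemma besselK_nonneg (ν y : ℝ) : 0 ≤ besselK ν y :=
  integral_nonneg fun _ => mul_nonneg (exp_pos _).le (cosh_pos _).le

lemma integrable_exp_neg_mul_cosh_mul_exp (hy : 0 < y) (ν : ℝ) :
    Integrable fun t : ℝ => exp (-(y * cosh t)) * exp (ν * t) := by
  refine (integrable_exp_mul_sub_mul_sq (half_pos hy) ν).mono' (by fun_prop)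
    (ae_of_all _ fun t => ?_)
  rw [norm_of_nonneg (by positivity), ← exp_add, exp_le_exp]
  nlinarith [one_add_sq_div_two_le_cosh t]

lemma two_mul_besselK_eq_integral (hy : 0 < y) (ν : ℝ) :
    2 * besselK ν y = ∫ t, exp (-(y * cosh t)) * exp (ν * t) := by
  set f : ℝ → ℝ := fun t => exp (-(y * cosh t)) * exp (ν * t) with f_def
  have f_integrable : Integrable f := integrable_exp_neg_mul_cosh_mul_exp hy ν
  have cosh_mul_abs (t : ℝ) : cosh (ν * |t|) = cosh (ν * t) := by
    rw [← cosh_abs, abs_mul, abs_abs, ← abs_mul, cosh_abs]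
  have symmetrization (t : ℝ) :
      exp (-(y * cosh |t|)) * cosh (ν * |t|) = (f t + f (-t)) / 2 := by
    simp only [f_def, cosh_mul_abs, cosh_abs, cosh_eq (ν * t), cosh_neg, mul_neg]
    ring
  calc 2 * besselK ν y
    _ = ∫ t, exp (-(y * cosh |t|)) * cosh (ν * |t|) :=
      (integral_comp_abs (f := fun t => exp (-(y * cosh t)) * cosh (ν * t))).symm
    _ = ∫ t, (f t + f (-t)) / 2 := by simp_rw [symmetrization]
    _ = ∫ t, f t := by
      rw [integral_div, integral_add f_integrable f_integrable.comp_neg, integral_neg_eq_self f,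
        add_self_div_two]

lemma two_mul_besselK_eq_integral_Ioi (hy : 0 < y) (ν : ℝ) :
    2 * besselK ν y = ∫ s in Ioi 0, exp (-(y * (s + s⁻¹) / 2)) * s ^ (ν - 1) := by
  rw [two_mul_besselK_eq_integral hy, integral_Ioi_zero_eq_integral_exp_smul]
  refine integral_congr_ae (ae_of_all _ fun t => ?_)
  have exp_mul_rpow : exp (ν * t) = exp t * exp t ^ (ν - 1) := by
    rw [← exp_mul, ← exp_add]
    ring_nf
  simp only [smul_eq_mul, exp_mul_rpow, cosh_eq, exp_neg t, mul_div_assoc]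
  ring

lemma rpow_mul_besselK_eq_integral_Ioi (hy : 0 < y) (ν : ℝ) :
    y ^ ν * besselK ν y =
      (∫ r in Ioi 0, exp (-((2 * r)⁻¹ * y ^ 2)) * (r ^ (ν - 1) * exp (-(r / 2)))) / 2 := by
  have rescaled : ∀ s ∈ Ioi (0 : ℝ), y ^ (ν - 1) * (exp (-(y * (s + s⁻¹) / 2)) * s ^ (ν - 1)) =
      exp (-((2 * (y * s))⁻¹ * y ^ 2)) * ((y * s) ^ (ν - 1) * exp (-(y * s / 2))) := by
    intro s (hs : 0 < s)
    have exponent : -(y * (s + s⁻¹) / 2) = -((2 * (y * s))⁻¹ * y ^ 2) + -(y * s / 2) := by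
      field_simp
      ring
    rw [exponent, exp_add, mul_rpow hy.le hs.le]
    ring
  have rpow_eq : y ^ ν = y * y ^ (ν - 1) := by
    rw [rpow_sub_one hy.ne', mul_div_cancel₀ _ hy.ne']
  have scaling := integral_comp_mul_left_Ioi
    (fun r => exp (-((2 * r)⁻¹ * y ^ 2)) * (r ^ (ν - 1) * exp (-(r / 2)))) 0 hy
  rw [mul_zero, ← setIntegral_congr_fun measurableSet_Ioi rescaled, integral_const_mul,
    ← two_mul_besselK_eq_integral_Ioi hy, smul_eq_mul, eq_inv_mul_iff_mul_eq₀ hy.ne'] at scaling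
  rw [← scaling, rpow_eq]
  ring

end BesselK

section VarianceGamma

/-- Up to a constant, the joint density at `(u, r)` of a gamma variable `R` of shape `ν + 1 / 2` and
rate `1 / 2` and a variable `U` that is centred Gaussian of variance `r` given `R = r`, tilted by
`exp (ρ * u)`. It mixes over `r` to the variance-gamma density. -/
noncomputable def gaussianGammaWeight (ν ρ u r : ℝ) : ℝ :=
  exp (ρ * u - (2 * r)⁻¹ * u ^ 2) * (r ^ (ν - 1) * exp (-(r / 2)))

/-- The variance-gamma density with shape `ν + 1 / 2`, asymmetry `ρ` and unit scale.
Its value at `u = 0` is a junk value, since the integral defining `besselK ν 0` diverges. -/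
noncomputable def varianceGammaPDFReal (ν ρ u : ℝ) : ℝ :=
  (1 - ρ ^ 2) ^ (ν + 1 / 2) / (√π * 2 ^ ν * Gamma (ν + 1 / 2)) *
    (exp (ρ * u) * (|u| ^ ν * besselK ν |u|))

variable {ν ρ : ℝ}

lemma exp_mul_rpow_mul_besselK_eq_integral (ν ρ : ℝ) {u : ℝ} (hu : u ≠ 0) :
    exp (ρ * u) * (|u| ^ ν * besselK ν |u|) = (∫ r in Ioi 0, gaussianGammaWeight ν ρ u r) / 2 := by
  rw [rpow_mul_besselK_eq_integral_Ioi (abs_pos.mpr hu), ← mul_div_assoc, ← integral_const_mul]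
  simp_rw [gaussianGammaWeight, sq_abs, sub_eq_add_neg, exp_add, mul_assoc]

lemma integrable_gaussianGammaWeight_left (ν ρ : ℝ) {r : ℝ} (hr : 0 < r) :
    Integrable fun u => gaussianGammaWeight ν ρ u r :=
  (integrable_exp_mul_sub_mul_sq (by positivity) ρ).mul_const _

lemma integral_gaussianGammaWeight_left (ν ρ : ℝ) {r : ℝ} (hr : 0 < r) :
    ∫ u, gaussianGammaWeight ν ρ u r =
      √(2 * π) * (r ^ (ν + 1 / 2 - 1) * exp (-((1 - ρ ^ 2) / 2 * r))) := by
  have sqrt_eq : √(π / (2 * r)⁻¹) = √(2 * π) * r ^ (1 / 2 : ℝ) := by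
    rw [← sqrt_eq_rpow, ← sqrt_mul (by positivity), div_inv_eq_mul]
    ring_nf
  have rpow_eq : r ^ (ν + 1 / 2 - 1) = r ^ (1 / 2 : ℝ) * r ^ (ν - 1) := by
    rw [← rpow_add hr]
    ring_nf
  have exp_eq : exp (-((1 - ρ ^ 2) / 2 * r)) = exp (ρ ^ 2 / (4 * (2 * r)⁻¹)) * exp (-(r / 2)) := by
    rw [← exp_add]
    congr 1
    field_simp
    ring
  simp only [gaussianGammaWeight]
  rw [integral_mul_const, integral_exp_mul_sub_mul_sq (by positivity), sqrt_eq, rpow_eq, exp_eq]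
  ring

lemma integrable_uncurry_gaussianGammaWeight (hν : -(1 / 2) < ν) (hρ : ρ ^ 2 < 1) :
    Integrable (Function.uncurry (gaussianGammaWeight ν ρ))
      (volume.prod (volume.restrict (Ioi 0))) := by
  have measurable_weight : Measurable (Function.uncurry (gaussianGammaWeight ν ρ)) := by
    unfold gaussianGammaWeight
    fun_prop
  refine (integrable_prod_iff' measurable_weight.aestronglyMeasurable).mpr ⟨?_, ?_⟩
  · filter_upwards [ae_restrict_mem measurableSet_Ioi] with r hr
    exact integrable_gaussianGammaWeight_left ν ρ hr
  · have gamma_integrable : IntegrableOn (fun r : ℝ => √(2 * π) *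
        (r ^ (ν + 1 / 2 - 1) * exp (-((1 - ρ ^ 2) / 2) * r ^ (1 : ℝ)))) (Ioi 0) :=
      (integrableOn_rpow_mul_exp_neg_mul_rpow (by linarith) one_pos (by linarith)).const_mul _
    refine gamma_integrable.congr ?_
    filter_upwards [ae_restrict_mem measurableSet_Ioi] with r (hr : 0 < r)
    have norm_weight (u : ℝ) : ‖gaussianGammaWeight ν ρ u r‖ = gaussianGammaWeight ν ρ u r :=
      norm_of_nonneg (by unfold gaussianGammaWeight; positivity)
    simp only [Function.uncurry_apply_pair, norm_weight, integral_gaussianGammaWeight_left ν ρ hr,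
      rpow_one, neg_mul]

lemma integral_integral_gaussianGammaWeight (hν : -(1 / 2) < ν) (hρ : ρ ^ 2 < 1) :
    ∫ u, ∫ r in Ioi 0, gaussianGammaWeight ν ρ u r =
      √(2 * π) * ((2 / (1 - ρ ^ 2)) ^ (ν + 1 / 2) * Gamma (ν + 1 / 2)) := by
  rw [integral_integral_swap (integrable_uncurry_gaussianGammaWeight hν hρ),
    setIntegral_congr_fun measurableSet_Ioi fun r hr => integral_gaussianGammaWeight_left ν ρ hr,
    integral_const_mul, integral_rpow_mul_exp_neg_mul_Ioi (by linarith) (by linarith), one_div_div]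

lemma varianceGammaPDFReal_nonneg (hν : -(1 / 2) < ν) (hρ : ρ ^ 2 < 1) (u : ℝ) :
    0 ≤ varianceGammaPDFReal ν ρ u := by
  have hΓ : 0 < Gamma (ν + 1 / 2) := Gamma_pos_of_pos (by linarith)
  have hK : 0 ≤ besselK ν |u| := besselK_nonneg ν |u|
  unfold varianceGammaPDFReal
  positivity

lemma varianceGammaPDFReal_ae_eq (ν ρ : ℝ) :
    varianceGammaPDFReal ν ρ =ᵐ[volume] fun u =>
      (1 - ρ ^ 2) ^ (ν + 1 / 2) / (√π * 2 ^ ν * Gamma (ν + 1 / 2)) *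
        ((∫ r in Ioi 0, gaussianGammaWeight ν ρ u r) / 2) := by
  filter_upwards [Measure.ae_ne volume (0 : ℝ)] with u hu
  rw [varianceGammaPDFReal, exp_mul_rpow_mul_besselK_eq_integral ν ρ hu]

lemma integrable_varianceGammaPDFReal (hν : -(1 / 2) < ν) (hρ : ρ ^ 2 < 1) :
    Integrable (varianceGammaPDFReal ν ρ) :=
  (((integrable_uncurry_gaussianGammaWeight hν hρ).integral_prod_left.div_const 2).const_mul
    _).congr (varianceGammaPDFReal_ae_eq ν ρ).symm

lemma integral_varianceGammaPDFReal (hν : -(1 / 2) < ν) (hρ : ρ ^ 2 < 1) :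
    ∫ u, varianceGammaPDFReal ν ρ u = 1 := by
  have hw : 0 < 1 - ρ ^ 2 := by linarith
  have hΓ : Gamma (ν + 1 / 2) ≠ 0 := (Gamma_pos_of_pos (by linarith)).ne'
  have two_rpow : (2 : ℝ) ^ (ν + 1 / 2) = 2 ^ ν * √2 := by
    rw [rpow_add two_pos, sqrt_eq_rpow]
  rw [integral_congr_ae (varianceGammaPDFReal_ae_eq ν ρ), integral_const_mul, integral_div,
    integral_integral_gaussianGammaWeight hν hρ, div_rpow two_pos.le hw.le, two_rpow,
    sqrt_mul two_pos.le]
  generalize Gamma (ν + 1 / 2) = Γ at hΓ ⊢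
  field_simp
  exact sq_sqrt two_pos.le

lemma mul_varianceGammaPDFReal_mul {n s : ℝ} (hn : 0 < n) (hs : 0 < s) (hρ : ρ ^ 2 < 1) (x : ℝ) :
    n / (s * (1 - ρ ^ 2)) * varianceGammaPDFReal ((n - 1) / 2) ρ (n / (s * (1 - ρ ^ 2)) * x) =
      n ^ ((n + 1) / 2) * 2 ^ ((1 - n) / 2) * |x| ^ ((n - 1) / 2) /
        (s ^ ((n + 1) / 2) * √(π * (1 - ρ ^ 2)) * Gamma (n / 2)) *
        exp (ρ * n * x / (s * (1 - ρ ^ 2))) *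
        besselK ((n - 1) / 2) (n * |x| / (s * (1 - ρ ^ 2))) := by
  set w := 1 - ρ ^ 2
  set ν := (n - 1) / 2 with ν_def
  have hw : 0 < w := sub_pos.mpr hρ
  have half_add_one : (n + 1) / 2 = ν + 1 := by linarith
  have half_one_sub : (1 - n) / 2 = -ν := by linarith
  have half : n / 2 = ν + 1 / 2 := by linarith
  have abs_arg : |n / (s * w) * x| = n / (s * w) * |x| := by
    rw [abs_mul, abs_of_pos (by positivity)]
  have exp_arg : ρ * n * x / (s * w) = ρ * (n / (s * w) * x) := by ring
  rw [varianceGammaPDFReal, half_add_one, half_one_sub, half, abs_arg, exp_arg,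
    mul_div_right_comm n |x|, mul_rpow (by positivity) (abs_nonneg x),
    div_rpow hn.le (by positivity), mul_rpow hs.le hw.le, rpow_add_one hn.ne',
    rpow_add_one hs.ne', rpow_neg two_pos.le, rpow_add hw, ← sqrt_eq_rpow, sqrt_mul pi_pos.le]
  field_simp
  rw [sq_sqrt hw.le]

end VarianceGamma

theorem density_nonneg_integrable_integral_one_general
    (ρ : ℝ) (hρ : ρ ∈ Ioo (-1 : ℝ) 1)
    (σX σY : ℝ) (hσX : 0 < σX) (hσY : 0 < σY) (n : ℝ) (hn : 0 < n)
    (p : ℝ → ℝ)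
    (hp : ∀ x : ℝ, x ≠ 0 → p x =
      n ^ ((n + 1) / 2) * 2 ^ ((1 - n) / 2) * |x| ^ ((n - 1) / 2) /
        ((σX * σY) ^ ((n + 1) / 2) * √(π * (1 - ρ ^ 2)) * Gamma (n / 2)) *
        exp (ρ * n * x / (σX * σY * (1 - ρ ^ 2))) *
        besselK ((n - 1) / 2) (n * |x| / (σX * σY * (1 - ρ ^ 2)))) :
    (∀ x : ℝ, x ≠ 0 → 0 ≤ p x) ∧ Integrable p volume ∧ ∫ x : ℝ, p x = 1 := by
  have hρ2 : ρ ^ 2 < 1 := (sq_lt_one_iff_abs_lt_one ρ).mpr (abs_lt.mpr hρ)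
  have hν : -(1 / 2) < (n - 1) / 2 := by linarith
  have hs : 0 < σX * σY := mul_pos hσX hσY
  set c := n / (σX * σY * (1 - ρ ^ 2))
  have hc : 0 < c := div_pos hn (mul_pos hs (sub_pos.mpr hρ2))
  have p_eq (x : ℝ) (hx : x ≠ 0) : p x = c * varianceGammaPDFReal ((n - 1) / 2) ρ (c * x) := by
    rw [hp x hx, mul_varianceGammaPDFReal_mul hn hs hρ2]
  have p_ae_eq : p =ᵐ[volume] fun x => c * varianceGammaPDFReal ((n - 1) / 2) ρ (c * x) := by
    filter_upwards [Measure.ae_ne volume (0 : ℝ)] with x hx using p_eq x hx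
  refine ⟨fun x hx => ?_, ?_, ?_⟩
  · rw [p_eq x hx]
    exact mul_nonneg hc.le (varianceGammaPDFReal_nonneg hν hρ2 _)
  · exact (((integrable_varianceGammaPDFReal hν hρ2).comp_mul_left' hc.ne').const_mul c).congr
      p_ae_eq.symm
  · rw [integral_congr_ae p_ae_eq, integral_const_mul, Measure.integral_comp_mul_left,
      integral_varianceGammaPDFReal hν hρ2, abs_of_pos (inv_pos.mpr hc), smul_eq_mul, mul_one,
      mul_inv_cancel₀ hc.ne']

/-- The claimed density `p` of the mean of `n` independent products of zero mean correlated
normal random variables (variances `σ_X², σ_Y²`, correlation `ρ`) is nonnegative, integrable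
on `ℝ`, and integrates to `1`. -/
theorem density_nonneg_integrable_integral_one
    (ρ : ℝ) (hρ : ρ ∈ Set.Ioo (-1 : ℝ) 1)
    (σX σY : ℝ) (hσX : 0 < σX) (hσY : 0 < σY) (n : ℕ) (hn : 1 ≤ n)
    (p : ℝ → ℝ)
    (hp : ∀ x : ℝ, x ≠ 0 → p x =
      (n : ℝ) ^ (((n : ℝ) + 1) / 2) * 2 ^ ((1 - (n : ℝ)) / 2) * |x| ^ (((n : ℝ) - 1) / 2) /
        ((σX * σY) ^ (((n : ℝ) + 1) / 2) * Real.sqrt (Real.pi * (1 - ρ ^ 2)) *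
          Real.Gamma ((n : ℝ) / 2)) *
        Real.exp (ρ * n * x / (σX * σY * (1 - ρ ^ 2))) *
        besselK (((n : ℝ) - 1) / 2) (n * |x| / (σX * σY * (1 - ρ ^ 2)))) :
    (∀ x : ℝ, x ≠ 0 → 0 ≤ p x) ∧ Integrable p volume ∧ ∫ x : ℝ, p x = 1 :=
  density_nonneg_integrable_integral_one_general ρ hρ σX σY hσX hσY n (Nat.cast_pos.mpr hn) p hp
end
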